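/- arXiv:1609.03182 — 2 statements merged into one kernel-verified Lean document; each statement's English description precedes it below -/
import Mathlib

section
/- Fix μ > 2ν > 0 and K > 0. There exists L_0 (depending only on μ, ν, K) such that for all L ≥ L_0, all x ≥ 1, all n ≥ 0, and all positive reals a_1,…,a_{n+1}, reals b̲_1,…,b̲_{n+1} and z' with z' ≥ min(ν,1)·1 (i.e. z' > ν) satisfying: (i) S_j := Σ_{i=1}^j log a_i ∈ (−j(μ+ν) − K, −j(μ−ν) + K) for all j ≤ n; (ii) |b̲_j| ≤ e^{νj + K} for all j ≤ n; (iii) b̲_{n+1} ≥ −x e^{n(μ−ν) − K}; and (iv) max(a_{n+1}, b̲_{n+1}) > x e^{n(μ+ν) + L + K}; one has Σ_{k=0}^{n−1} b̲_{k+1} Π_{j=1}^{k} a_j + ( b̲_{n+1} + z' a_{n+1} ) Π_{j=1}^{n} a_j > x. -/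
open Real

/-- Deterministic pathwise lower bound from the proof of Theorem 5.1:
for `μ > 2ν > 0`, `K > 0` there is `L₀` such that for all `L ≥ L₀`, `x ≥ 1`, `n ≥ 0`,
positive `a₁,…,a_{n+1}`, reals `b̲₁,…,b̲_{n+1}`, and `z' > ν` satisfying the envelope
conditions (i)–(iv), one has
`∑_{k=0}^{n−1} b̲_{k+1} ∏_{j=1}^k a_j + (b̲_{n+1} + z' a_{n+1}) ∏_{j=1}^n a_j > x`. -/
theorem stmt13 (μ ν K : ℝ) (hν : 0 < ν) (hμν : 2 * ν < μ) (hK : 0 < K) :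
    ∃ L₀ : ℝ, ∀ L : ℝ, L₀ ≤ L → ∀ x : ℝ, 1 ≤ x → ∀ n : ℕ,
      ∀ a bb : ℕ → ℝ, ∀ z' : ℝ,
      (∀ i : ℕ, 1 ≤ i → i ≤ n + 1 → 0 < a i) →
      ν < z' →
      (∀ j : ℕ, 1 ≤ j → j ≤ n →
        (∑ i ∈ Finset.Icc 1 j, Real.log (a i)) ∈
          Set.Ioo (-(j * (μ + ν)) - K) (-(j * (μ - ν)) + K)) →
      (∀ j : ℕ, 1 ≤ j → j ≤ n → |bb j| ≤ Real.exp (ν * j + K)) →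
      -x * Real.exp (n * (μ - ν) - K) ≤ bb (n + 1) →
      x * Real.exp (n * (μ + ν) + L + K) < max (a (n + 1)) (bb (n + 1)) →
      x < (∑ k ∈ Finset.range n, bb (k + 1) * ∏ j ∈ Finset.Icc 1 k, a j)
          + (bb (n + 1) + z' * a (n + 1)) * ∏ j ∈ Finset.Icc 1 n, a j := by
  set r : ℝ := Real.exp (-(μ - 2 * ν)) with hr
  have hr0 : 0 < r := Real.exp_pos _
  have hr1 : r < 1 := by rw [hr, Real.exp_lt_one_iff]; linarith
  set C : ℝ := Real.exp (ν + 2 * K) * (1 - r)⁻¹ with hC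
  have hC0 : 0 < C := mul_pos (Real.exp_pos _) (inv_pos.2 (by linarith))
  set m : ℝ := min ν 1 with hm
  have hm0 : 0 < m := lt_min hν one_pos
  refine ⟨Real.log ((3 + C) / m), ?_⟩
  intro L hL x hx n a bb z' ha hz hS hb hb1 hmax
  have hLe : 3 + C ≤ m * Real.exp L := by
    have h := Real.exp_le_exp.2 hL
    rw [Real.exp_log (by positivity), div_le_iff₀ hm0] at h
    linarith
  have hP : ∀ k : ℕ, k ≤ n → Real.exp (-(k * (μ + ν)) - K) ≤ ∏ j ∈ Finset.Icc 1 k, a j ∧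
      ∏ j ∈ Finset.Icc 1 k, a j ≤ Real.exp (-(k * (μ - ν)) + K) := by
    intro k hk
    rcases Nat.eq_zero_or_pos k with h0 | h0
    · subst h0
      simp [hK.le]
    · have e : ∏ j ∈ Finset.Icc 1 k, a j = Real.exp (∑ i ∈ Finset.Icc 1 k, Real.log (a i)) := by
        rw [Real.exp_sum]
        refine Finset.prod_congr rfl fun i hi => ?_
        rw [Finset.mem_Icc] at hi
        rw [Real.exp_log (ha i hi.1 (by omega))]
      rw [e]
      exact ⟨Real.exp_le_exp.2 (hS k h0 hk).1.le, Real.exp_le_exp.2 (hS k h0 hk).2.le⟩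
  have hsum : -C ≤ ∑ k ∈ Finset.range n, bb (k + 1) * ∏ j ∈ Finset.Icc 1 k, a j := by
    have h1 : ∀ k ∈ Finset.range n, -(Real.exp (ν + 2 * K) * r ^ k) ≤
        bb (k + 1) * ∏ j ∈ Finset.Icc 1 k, a j := by
      intro k hk
      rw [Finset.mem_range] at hk
      obtain ⟨p1, p2⟩ := hP k hk.le
      have p0 := (Real.exp_pos _).trans_le p1
      have hbk := hb (k + 1) (by omega) (by omega)
      have h2 : |bb (k + 1) * ∏ j ∈ Finset.Icc 1 k, a j| ≤ Real.exp (ν + 2 * K) * r ^ k := by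
        rw [abs_mul, abs_of_pos p0]
        refine (mul_le_mul hbk p2 p0.le (Real.exp_pos _).le).trans (le_of_eq ?_)
        rw [hr, ← Real.exp_nat_mul, ← Real.exp_add, ← Real.exp_add]
        congr 1
        push_cast
        ring
      exact (abs_le.1 h2).1
    have h3 := Finset.sum_le_sum h1
    rw [Finset.sum_neg_distrib, ← Finset.mul_sum] at h3
    have h4 : ∑ k ∈ Finset.range n, r ^ k ≤ (1 - r)⁻¹ := by
      rw [← tsum_geometric_of_lt_one hr0.le hr1]
      exact (summable_geometric_of_lt_one hr0.le hr1).sum_le_tsum _ (fun i _ => by positivity)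
    have h5 := mul_le_mul_of_nonneg_left h4 (Real.exp_pos (ν + 2 * K)).le
    linarith
  obtain ⟨p1, p2⟩ := hP n le_rfl
  set P := ∏ j ∈ Finset.Icc 1 n, a j with hPd
  have p0 : 0 < P := (Real.exp_pos _).trans_le p1
  have ha1 := ha (n + 1) (by omega) le_rfl
  have hx0 : 0 < x := by linarith
  have hbP : -x ≤ bb (n + 1) * P := by
    have h1 := mul_le_mul_of_nonneg_right hb1 p0.le
    have h2 : Real.exp (n * (μ - ν) - K) * P ≤ 1 := by
      refine (mul_le_mul_of_nonneg_left p2 (Real.exp_pos _).le).trans (le_of_eq ?_)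
      rw [← Real.exp_add, Real.exp_eq_one_iff]
      ring
    nlinarith
  have hE : Real.exp L ≤ Real.exp (n * (μ + ν) + L + K) * P := by
    refine le_trans (le_of_eq ?_) (mul_le_mul_of_nonneg_left p1 (Real.exp_pos _).le)
    rw [← Real.exp_add]
    congr 1
    ring
  have hxE := mul_le_mul_of_nonneg_left hE hx0.le
  have hxL : x * (3 + C) ≤ m * (x * Real.exp L) := by nlinarith
  have hxC : C ≤ x * C := by nlinarith
  have hxLp : 0 < x * Real.exp L := mul_pos hx0 (Real.exp_pos _)
  have hmν : m ≤ ν := min_le_left _ _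
  have hm1 : m ≤ 1 := min_le_right _ _
  have haP : 0 < a (n + 1) * P := mul_pos ha1 p0
  have hza : ν * (a (n + 1) * P) ≤ z' * (a (n + 1) * P) :=
    mul_le_mul_of_nonneg_right hz.le haP.le
  have hνa : 0 < ν * (a (n + 1) * P) := mul_pos hν haP
  have key : m * (x * Real.exp L) - x ≤ (bb (n + 1) + z' * a (n + 1)) * P := by
    have e : (bb (n + 1) + z' * a (n + 1)) * P = bb (n + 1) * P + z' * (a (n + 1) * P) := by ring
    rw [e]
    rcases lt_max_iff.1 hmax with h | h
    · have h1 := mul_lt_mul_of_pos_right h p0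
      have h2 : x * Real.exp L ≤ a (n + 1) * P := by linarith
      have h3 := mul_le_mul hmν h2 hxLp.le hν.le
      linarith
    · have h1 := mul_lt_mul_of_pos_right h p0
      have h2 := mul_le_mul_of_nonneg_right hm1 hxLp.le
      linarith
  linarith
end

section
/- Let A be a positive random variable with E[log A] < 0 and E[|log A|^q] < ∞ for some integer q ≥ 2. Define V(x) = max(1, (log x)^q) for x > 0 and (PV)(x) = E[ V(A x + 1) ]. Then there exist constants c > 0, b < ∞ and K > 0 such that for all x > 0, (PV)(x) ≤ V(x) − c V(x)^{(q−1)/q} + b·1{x ≤ K}. -/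
open MeasureTheory Filter Real

lemma taylor_bound (p : ℕ) : ∃ D : ℝ, 0 ≤ D ∧ ∀ s t : ℝ, 1 ≤ s →
    |(s + t) ^ (p + 2) - s ^ (p + 2) - (p + 2 : ℝ) * s ^ (p + 1) * t|
      ≤ s ^ p * (D * (1 + |t|) ^ (p + 2)) := by
  induction p with
  | zero =>
    refine ⟨1, zero_le_one, fun s t hs => ?_⟩
    have h : (s + t) ^ (0 + 2) - s ^ (0 + 2) - ((0 : ℕ) + 2 : ℝ) * s ^ (0 + 1) * t = t ^ 2 := by
      push_cast; ring
    rw [h, abs_of_nonneg (sq_nonneg t)]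
    have := abs_nonneg t
    have h2 := sq_abs t
    simp only [pow_zero, one_mul, zero_add]
    nlinarith
  | succ p ih =>
    obtain ⟨D, hD, h⟩ := ih
    refine ⟨D + (p + 2), by positivity, fun s t hs => ?_⟩
    specialize h s t hs
    set R := (s + t) ^ (p + 2) - s ^ (p + 2) - (p + 2 : ℝ) * s ^ (p + 1) * t with hR
    have hst : |s + t| ≤ s * (1 + |t|) := by
      have h1 := abs_add_le s t
      rw [abs_of_nonneg (by linarith : (0:ℝ) ≤ s)] at h1
      nlinarith [abs_nonneg t]
    have e : (s + t) ^ (p + 1 + 2) - s ^ (p + 1 + 2) - ((p + 1 : ℕ) + 2 : ℝ) * s ^ (p + 1 + 1) * t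
        = (s + t) * R + (p + 2) * s ^ (p + 1) * t ^ 2 := by
      rw [hR]; push_cast; ring
    rw [e]
    have hs0 : 0 ≤ s := by linarith
    have ht := abs_nonneg t
    have h3 : |(s + t) * R| ≤ (s * (1 + |t|)) * (s ^ p * (D * (1 + |t|) ^ (p + 2))) := by
      rw [abs_mul]; gcongr
    have h4 : t ^ 2 ≤ (1 + |t|) ^ (p + 1 + 2) := by
      calc t ^ 2 = |t| ^ 2 := (sq_abs t).symm
        _ ≤ (1 + |t|) ^ 2 := by gcongr; linarith
        _ ≤ (1 + |t|) ^ (p + 1 + 2) := pow_le_pow_right₀ (by linarith) (by omega)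
    have h5 : |(p + 2) * s ^ (p + 1) * t ^ 2| ≤ (p + 2) * s ^ (p + 1) * (1 + |t|) ^ (p + 1 + 2) := by
      rw [abs_of_nonneg (by positivity)]; gcongr
    calc _ ≤ _ := abs_add_le _ _
      _ ≤ _ := add_le_add h3 h5
      _ = _ := by ring

lemma log_add_abs {a d : ℝ} (ha : 0 < a) (hd : 0 ≤ d) (hd1 : d ≤ 1) :
    |Real.log (a + d)| ≤ |Real.log a| + 1 := by
  rw [abs_le]
  constructor
  · have h1 : Real.log a ≤ Real.log (a + d) := Real.log_le_log ha (by linarith)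
    have := neg_abs_le (Real.log a)
    linarith
  · rw [Real.log_le_iff_le_exp (by linarith), Real.exp_add]
    have h1 : a ≤ Real.exp |Real.log a| := by
      rw [← Real.log_le_iff_le_exp ha]; exact le_abs_self _
    have h2 : 1 ≤ Real.exp |Real.log a| := Real.one_le_exp (abs_nonneg _)
    have h3 : (2:ℝ) ≤ Real.exp 1 := by
      have := Real.add_one_le_exp (1:ℝ); linarith
    nlinarith

theorem stmt14 {Ω : Type*} [MeasurableSpace Ω] (μ : Measure Ω) [IsProbabilityMeasure μ]
    (A : Ω → ℝ) (hAmeas : Measurable A) (hApos : ∀ᵐ ω ∂μ, 0 < A ω)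
    (q : ℕ) (hq : 2 ≤ q)
    (hmom : Integrable (fun ω => |Real.log (A ω)| ^ q) μ)
    (hEA : (∫ ω, Real.log (A ω) ∂μ) < 0)
    (V : ℝ → ℝ) (hV : ∀ x, V x = max 1 (Real.log x ^ q)) :
    ∃ c : ℝ, 0 < c ∧ ∃ b K : ℝ, 0 < K ∧ ∀ x : ℝ, 0 < x →
      (∫ ω, V (A ω * x + 1) ∂μ) ≤
        V x - c * V x ^ ((q - 1 : ℝ) / q) + (if x ≤ K then b else 0) := by
  have hlogm : Measurable fun ω => Real.log (A ω) := Real.measurable_log.comp hAmeas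
  have habsm : Measurable fun ω => |Real.log (A ω)| := continuous_abs.measurable.comp hlogm
  have hG : ∀ M : ℝ, 0 ≤ M → Integrable (fun ω => (|Real.log (A ω)| + M) ^ q) μ := by
    intro M hM
    refine Integrable.mono' ((hmom.add (integrable_const (M ^ q))).const_mul (2 ^ (q - 1)))
      ((habsm.add_const M).pow_const q).aestronglyMeasurable (Eventually.of_forall fun ω => ?_)
    rw [Real.norm_of_nonneg (by positivity)]
    exact add_pow_le (abs_nonneg _) hM q
  have hG1 : Integrable (fun ω => |Real.log (A ω)| + 1) μ := by
    refine Integrable.mono' (hG 1 zero_le_one) (habsm.add_const 1).aestronglyMeasurable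
      (Eventually.of_forall fun ω => ?_)
    rw [Real.norm_of_nonneg (by positivity)]
    exact le_self_pow₀ (by linarith [abs_nonneg (Real.log (A ω))]) (by omega)
  -- truncation level
  have hlim : Tendsto (fun n : ℕ => ∫ ω, Real.log (A ω + 1 / ((n : ℝ) + 1)) ∂μ) atTop
      (nhds (∫ ω, Real.log (A ω) ∂μ)) := by
    refine tendsto_integral_of_dominated_convergence _ (fun n => ?_) hG1 (fun n => ?_) ?_
    · exact (Real.measurable_log.comp (hAmeas.add_const _)).aestronglyMeasurable
    · filter_upwards [hApos] with ω hω
      refine log_add_abs hω (by positivity) ?_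
      rw [div_le_one (by positivity)]
      have : (0:ℝ) ≤ n := Nat.cast_nonneg n
      linarith
    · filter_upwards [hApos] with ω hω
      have h1 : Tendsto (fun n : ℕ => A ω + 1 / ((n : ℝ) + 1)) atTop (nhds (A ω + 0)) :=
        tendsto_const_nhds.add tendsto_one_div_add_atTop_nhds_zero_nat
      rw [add_zero] at h1
      exact ((Real.continuousAt_log hω.ne').tendsto).comp h1
  obtain ⟨n, hn⟩ := (hlim.eventually_lt_const hEA).exists
  set N : ℝ := (n : ℝ) + 1 with hN
  have hN1 : 1 ≤ N := by
    have : (0:ℝ) ≤ n := Nat.cast_nonneg n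
    linarith
  have hd1 : 1 / N ≤ 1 := by rw [div_le_one (by linarith)]; exact hN1
  set L : Ω → ℝ := fun ω => Real.log (A ω + 1 / N) with hL
  have hLm : Measurable L := Real.measurable_log.comp (hAmeas.add_const _)
  have hLb : ∀ᵐ ω ∂μ, |L ω| ≤ |Real.log (A ω)| + 1 := by
    filter_upwards [hApos] with ω hω
    exact log_add_abs hω (by positivity) hd1
  have hLi : Integrable L μ := hG1.mono' hLm.aestronglyMeasurable hLb
  obtain ⟨m, hm, hmL⟩ : ∃ m : ℝ, 0 < m ∧ ∫ ω, L ω ∂μ = -m := ⟨-∫ ω, L ω ∂μ, by linarith, by ring⟩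
  obtain ⟨p, rfl⟩ : ∃ p, q = p + 2 := ⟨q - 2, by omega⟩
  obtain ⟨D, hD, hT⟩ := taylor_bound p
  set C : ℝ := D * ∫ ω, (|Real.log (A ω)| + 2) ^ (p + 2) ∂μ with hC
  set S : ℝ := max 1 ((C + 1) / m) with hS
  set K : ℝ := Real.exp S + N with hK
  have hK1 : 1 ≤ K := by have := Real.exp_pos S; linarith
  set c : ℝ := min 1 m with hc
  refine ⟨c, lt_min one_pos hm, ∫ ω, (|Real.log (A ω)| + (Real.log K + 1)) ^ (p + 2) ∂μ, K,
    by linarith, fun x hx => ?_⟩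
  have hVnn : ∀ y, 0 ≤ V y := fun y => by rw [hV]; exact zero_le_one.trans (le_max_left _ _)
  split_ifs with hxK
  · have hlK : 0 ≤ Real.log K := Real.log_nonneg hK1
    have h1 : (∫ ω, V (A ω * x + 1) ∂μ) ≤
        ∫ ω, (|Real.log (A ω)| + (Real.log K + 1)) ^ (p + 2) ∂μ := by
      refine integral_mono_of_nonneg (Eventually.of_forall fun ω => hVnn _)
        (hG _ (by linarith)) ?_
      filter_upwards [hApos] with ω hω
      have ha := abs_nonneg (Real.log (A ω))
      rw [hV]
      refine max_le (one_le_pow₀ (by linarith)) ?_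
      have hpos : 0 < A ω * x := mul_pos hω hx
      refine pow_le_pow_left₀ (Real.log_nonneg (by linarith)) ?_ _
      have h2 : Real.log (A ω * x + 1) ≤ Real.log (K * (A ω + 1)) := by
        refine Real.log_le_log (by linarith) ?_
        nlinarith
      rw [Real.log_mul (by linarith) (by linarith)] at h2
      have h3 := (abs_le.mp (log_add_abs hω zero_le_one le_rfl)).2
      linarith
    have h2 : c * V x ^ (((p + 2 : ℕ) - 1 : ℝ) / (p + 2 : ℕ)) ≤ V x := by
      have hV1 : 1 ≤ V x := by rw [hV]; exact le_max_left _ _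
      have h3 : V x ^ (((p + 2 : ℕ) - 1 : ℝ) / (p + 2 : ℕ)) ≤ V x ^ (1:ℝ) := by
        refine Real.rpow_le_rpow_of_exponent_le hV1 ?_
        rw [div_le_one (by positivity)]; linarith
      rw [Real.rpow_one] at h3
      have h4 : 0 ≤ V x ^ (((p + 2 : ℕ) - 1 : ℝ) / (p + 2 : ℕ)) := Real.rpow_nonneg (hVnn x) _
      have h5 : c ≤ 1 := min_le_left _ _
      nlinarith
    linarith
  · push Not at hxK
    have hxS : Real.exp S < x := by linarith
    have hxN : N < x := by have := Real.exp_pos S; linarith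
    set s := Real.log x with hs
    have hsS : S < s := (Real.lt_log_iff_exp_lt hx).mpr hxS
    have hs1 : 1 ≤ s := (le_max_left _ _).trans hsS.le
    have hs0 : 0 ≤ s := by linarith
    have hsC : C + 1 ≤ m * s := by
      have : (C + 1) / m ≤ s := (le_max_right _ _).trans hsS.le
      rw [div_le_iff₀ hm] at this; linarith
    have hVx : V x = s ^ (p + 2) := by
      rw [hV]; exact max_eq_right (one_le_pow₀ hs1)
    have hVp : V x ^ (((p + 2 : ℕ) - 1 : ℝ) / (p + 2 : ℕ)) = s ^ (p + 1) := by
      rw [hVx, ← Real.rpow_natCast, ← Real.rpow_mul hs0, ← Real.rpow_natCast]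
      congr 1
      push_cast
      field_simp
      ring
    rw [hVp, hVx, add_zero]
    have hg1 := (hLi.const_mul ((p + 2 : ℝ) * s ^ (p + 1)))
    have hg2 := ((hG 2 zero_le_two).const_mul (s ^ p * D))
    have h1 : (∫ ω, V (A ω * x + 1) ∂μ) ≤
        ∫ ω, ((1 + s ^ (p + 2)) + ((p + 2 : ℝ) * s ^ (p + 1) * L ω
          + s ^ p * D * (|Real.log (A ω)| + 2) ^ (p + 2))) ∂μ := by
      refine integral_mono_of_nonneg (Eventually.of_forall fun ω => hVnn _)
        ((integrable_const _).add (hg1.add hg2)) ?_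
      filter_upwards [hApos, hLb] with ω hω hb
      have hpos : 0 < A ω * x := mul_pos hω hx
      have hW0 : 0 ≤ Real.log (A ω * x + 1) := Real.log_nonneg (by linarith)
      have hW : Real.log (A ω * x + 1) ≤ s + L ω := by
        rw [hs, hL, ← Real.log_mul hx.ne' (by positivity)]
        refine Real.log_le_log (by linarith) ?_
        have : 1 ≤ x * (1 / N) := by
          rw [mul_one_div, le_div_iff₀ (by linarith)]; linarith
        linarith
      have h2 := pow_le_pow_left₀ hW0 hW (p + 2)
      have h3 := (abs_le.mp (hT s (L ω) hs1)).2
      have h4 : s ^ p * (D * (1 + |L ω|) ^ (p + 2)) ≤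
          s ^ p * (D * (|Real.log (A ω)| + 2) ^ (p + 2)) := by
        gcongr ?_ * (?_ * ?_ ^ _)
        linarith
      have h5 : V (A ω * x + 1) ≤ 1 + Real.log (A ω * x + 1) ^ (p + 2) := by
        rw [hV]
        have := pow_nonneg hW0 (p + 2)
        exact max_le (by linarith) (by linarith)
      rw [← mul_assoc (s ^ p) D ((|Real.log (A ω)| + 2) ^ (p + 2))] at h4
      show V (A ω * x + 1) ≤ _
      linarith
    have hg3 : Integrable (fun ω => (p + 2 : ℝ) * s ^ (p + 1) * L ω
          + s ^ p * D * (|Real.log (A ω)| + 2) ^ (p + 2)) μ := hg1.add hg2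
    rw [integral_add (integrable_const _) hg3, integral_add hg1 hg2,
      integral_const_mul, integral_const_mul, hmL, mul_assoc (s ^ p) D, ← hC] at h1
    simp only [integral_const, probReal_univ, one_smul] at h1
    refine h1.trans ?_
    have hsp : 1 ≤ s ^ p := one_le_pow₀ hs1
    have hcm : c ≤ m := min_le_right _ _
    have h6 : s ^ p * (C + 1) ≤ s ^ p * (m * s) := by gcongr
    have h7 : 0 ≤ s ^ (p + 1) := by positivity
    have h8 : s ^ p * (m * s) = m * s ^ (p + 1) := by ring
    have h9 : c * s ^ (p + 1) ≤ m * s ^ (p + 1) := by gcongr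
    have h10 : 0 ≤ (p : ℝ) * (m * s ^ (p + 1)) := by positivity
    nlinarith
end
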